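/- arXiv:1804.03084 — 4 statements merged into one kernel-verified Lean document; each statement's English description precedes it below -/
import Mathlib

section
/- Let r, s ≥ 1 and n ≥ 0 be integers. Let P : ℂ^{2^r} → ℂ^{2^r} and Q : ℂ^{2^s} → ℂ^{2^s} be idempotent linear maps whose ranges equal the complex spans of {v_α^{⊗r} : α ∈ ℝ} and {v_β^{⊗s} : β ∈ ℝ} respectively. Then for any two linear maps f, g : ℂ^{2^{r+s}} → ℂ^{2^n}, one has (∀ α, β ∈ ℝ, f(v_α^{⊗r} ⊗ v_β^{⊗s}) = g(v_α^{⊗r} ⊗ v_β^{⊗s})) if and only if f ∘ (P ⊗ Q) = g ∘ (P ⊗ Q). -/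
open Complex Matrix Kronecker

/-- The `r`-fold tensor power of `v_α = (1, e^{iα})`, as a vector in
`(ℂ²)^{⊗r} ≅ ℂ^{2^r}` indexed by bit-strings `x : Fin r → Fin 2`; its coordinate
at `x` is `e^{i·|x|·α}` where `|x|` is the Hamming weight of `x`. -/
noncomputable def vpow (r : ℕ) (α : ℝ) : (Fin r → Fin 2) → ℂ :=
  fun x => Complex.exp (((∑ i, ((x i : ℕ) : ℂ))) * (α : ℂ) * Complex.I)

/-- `v_α^{⊗r} ⊗ v_β^{⊗s}`, under the identification
`ℂ^{2^r} ⊗ ℂ^{2^s} ≅ ℂ^{2^{r+s}}` (indexing by pairs of bit-strings). -/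
noncomputable def vpow2 (r s : ℕ) (α β : ℝ) :
    (Fin r → Fin 2) × (Fin s → Fin 2) → ℂ :=
  fun p => vpow r α p.1 * vpow s β p.2

theorem mulVec_tensor_of_span {r s n : ℕ}
    (f : Matrix (Fin n → Fin 2) ((Fin r → Fin 2) × (Fin s → Fin 2)) ℂ)
    (h : ∀ α β : ℝ, f.mulVec (vpow2 r s α β) = 0)
    (u : (Fin r → Fin 2) → ℂ) (hu : u ∈ Submodule.span ℂ (Set.range (vpow r)))
    (w : (Fin s → Fin 2) → ℂ) (hw : w ∈ Submodule.span ℂ (Set.range (vpow s))) :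
    f.mulVec (fun p => u p.1 * w p.2) = 0 := by
  induction hu using Submodule.span_induction with
  | mem u hu =>
    obtain ⟨α, rfl⟩ := hu
    induction hw using Submodule.span_induction with
    | mem w hw =>
      obtain ⟨β, rfl⟩ := hw
      exact h α β
    | zero =>
      convert f.mulVec_zero using 2
      ext p; simp
    | add a b _ _ ha hb =>
      have : (fun p : (Fin r → Fin 2) × (Fin s → Fin 2) => vpow r α p.1 * (a + b) p.2)
          = (fun p => vpow r α p.1 * a p.2) + (fun p => vpow r α p.1 * b p.2) := by
        ext p; simp [mul_add]
      rw [this, Matrix.mulVec_add, ha, hb, add_zero]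
    | smul c a _ ha =>
      have : (fun p : (Fin r → Fin 2) × (Fin s → Fin 2) => vpow r α p.1 * (c • a) p.2)
          = c • (fun p => vpow r α p.1 * a p.2) := by
        ext p; simp only [Pi.smul_apply, smul_eq_mul]; ring
      rw [this, Matrix.mulVec_smul, ha, smul_zero]
  | zero =>
    convert f.mulVec_zero using 2
    ext p; simp
  | add a b _ _ ha hb =>
    have : (fun p : (Fin r → Fin 2) × (Fin s → Fin 2) => (a + b) p.1 * w p.2)
        = (fun p => a p.1 * w p.2) + (fun p => b p.1 * w p.2) := by
      ext p; simp [add_mul]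
    rw [this, Matrix.mulVec_add, ha, hb, add_zero]
  | smul c a _ ha =>
    have : (fun p : (Fin r → Fin 2) × (Fin s → Fin 2) => (c • a) p.1 * w p.2)
        = c • (fun p => a p.1 * w p.2) := by
      ext p; simp only [Pi.smul_apply, smul_eq_mul]; ring
    rw [this, Matrix.mulVec_smul, ha, smul_zero]

theorem kron_mulVec_tensor {m k : Type*} [Fintype m] [Fintype k]
    (P : Matrix m m ℂ) (Q : Matrix k k ℂ) (u : m → ℂ) (w : k → ℂ) :
    (P ⊗ₖ Q).mulVec (fun p => u p.1 * w p.2)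
      = fun p => P.mulVec u p.1 * Q.mulVec w p.2 := by
  ext p
  simp only [Matrix.mulVec, dotProduct, Matrix.kroneckerMap_apply, Fintype.sum_prod_type,
    Finset.sum_mul_sum]
  refine Finset.sum_congr rfl fun i _ => Finset.sum_congr rfl fun j _ => ?_
  ring

theorem idem_fix {m : Type*} [Fintype m] (P : Matrix m m ℂ) (hP : P * P = P)
    (u : m → ℂ) (hu : u ∈ LinearMap.range P.mulVecLin) : P.mulVec u = u := by
  obtain ⟨v, rfl⟩ := hu
  simp [Matrix.mulVec_mulVec, hP]

theorem col_mem {m : Type*} [Fintype m] [DecidableEq m] (P : Matrix m m ℂ) (j : m) :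
    (fun i => P i j) ∈ LinearMap.range P.mulVecLin :=
  ⟨Pi.single j 1, by ext i; simp⟩

theorem eq_on_vpow2_iff_comp_kronecker_projectors_eq (r s n : ℕ)
    (hr : 1 ≤ r) (hs : 1 ≤ s)
    (P : Matrix (Fin r → Fin 2) (Fin r → Fin 2) ℂ)
    (Q : Matrix (Fin s → Fin 2) (Fin s → Fin 2) ℂ)
    (hP : P * P = P) (hQ : Q * Q = Q)
    (hPrange : LinearMap.range P.mulVecLin = Submodule.span ℂ (Set.range (vpow r)))
    (hQrange : LinearMap.range Q.mulVecLin = Submodule.span ℂ (Set.range (vpow s)))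
    (f g : Matrix (Fin n → Fin 2) ((Fin r → Fin 2) × (Fin s → Fin 2)) ℂ) :
    (∀ α β : ℝ, f.mulVec (vpow2 r s α β) = g.mulVec (vpow2 r s α β)) ↔
      f * (P ⊗ₖ Q) = g * (P ⊗ₖ Q) := by
  constructor
  · intro h
    have h0 : ∀ α β : ℝ, (f - g).mulVec (vpow2 r s α β) = 0 := fun α β => by
      rw [Matrix.sub_mulVec, h, sub_self]
    rw [← sub_eq_zero, ← Matrix.sub_mul]
    ext i ⟨x, y⟩
    have := mulVec_tensor_of_span (f - g) h0 _ (hPrange ▸ col_mem P x) _ (hQrange ▸ col_mem Q y)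
    exact congrFun this i
  · intro h α β
    have hu := idem_fix P hP (vpow r α) (hPrange ▸ Submodule.subset_span ⟨α, rfl⟩)
    have hw := idem_fix Q hQ (vpow s β) (hQrange ▸ Submodule.subset_span ⟨β, rfl⟩)
    have e : (P ⊗ₖ Q).mulVec (vpow2 r s α β) = vpow2 r s α β := by
      have := kron_mulVec_tensor P Q (vpow r α) (vpow s β)
      rw [hu, hw] at this
      exact this
    rw [← e, Matrix.mulVec_mulVec, Matrix.mulVec_mulVec, h]
end

section
/- For all n, m ∈ ℕ, every matrix obtained from the generator matrices of the π-fragment of the ΔZX-calculus by finitely many Kronecker products and matrix compositions lies in ⋃_{k∈ℕ} (1/√2)^k · M_{2^m × 2^n}(ℤ), i.e. is an integer matrix multiplied by a nonnegative integer power of 1/√2. -/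
open Complex Matrix Kronecker

/-- Kronecker product of matrices of sizes `2^a × 2^b` and `2^c × 2^d`,
reindexed as a `2^(a+c) × 2^(b+d)` matrix. -/
noncomputable def kron2 {a b c d : ℕ} (A : Matrix (Fin (2 ^ a)) (Fin (2 ^ b)) ℂ)
    (B : Matrix (Fin (2 ^ c)) (Fin (2 ^ d)) ℂ) :
    Matrix (Fin (2 ^ (a + c))) (Fin (2 ^ (b + d))) ℂ :=
  Matrix.reindex (finProdFinEquiv.trans (finCongr (pow_add 2 a c).symm))
    (finProdFinEquiv.trans (finCongr (pow_add 2 b d).symm)) (A ⊗ₖ B)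

/-- The Hadamard matrix `H = (1/√2)·[[1,1],[1,−1]]`. -/
noncomputable def Hmat : Matrix (Fin 2) (Fin 2) ℂ :=
  ((Real.sqrt 2 : ℝ) : ℂ)⁻¹ • !![1, 1; 1, -1]

/-- `H^{⊗n}`. -/
noncomputable def Hpow : (n : ℕ) → Matrix (Fin (2 ^ n)) (Fin (2 ^ n)) ℂ
  | 0 => 1
  | n + 1 => kron2 (Hpow n) Hmat

/-- The green spider `Z^{(n,m)}(α)`: the `2^m × 2^n` matrix whose `(0…0,0…0)` entry
is `1`, whose `(1…1,1…1)` entry is `e^{iα}` and whose other entries are `0`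
(for `n = m = 0` the two entries coincide, giving the `1×1` matrix `(1+e^{iα})`). -/
noncomputable def Zspider (n m : ℕ) (α : ℝ) : Matrix (Fin (2 ^ m)) (Fin (2 ^ n)) ℂ :=
  Matrix.of fun i j =>
    (if (i : ℕ) = 0 ∧ (j : ℕ) = 0 then 1 else 0) +
    (if (i : ℕ) = 2 ^ m - 1 ∧ (j : ℕ) = 2 ^ n - 1 then Complex.exp ((α : ℂ) * Complex.I) else 0)

/-- The family of matrices generated by the generator matrices of the π-fragment of
the ΔZX-calculus, closed under Kronecker product and matrix composition.
`ZXpi n m M` means that `M : ℂ^{2^n} → ℂ^{2^m}` is representable. -/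
inductive ZXpi : (n m : ℕ) → Matrix (Fin (2 ^ m)) (Fin (2 ^ n)) ℂ → Prop
  | green (n m : ℕ) (α : ℝ) (hα : α = 0 ∨ α = Real.pi) : ZXpi n m (Zspider n m α)
  | red (n m : ℕ) (α : ℝ) (hα : α = 0 ∨ α = Real.pi) :
      ZXpi n m (Hpow m * Zspider n m α * Hpow n)
  | had : ZXpi 1 1 Hmat
  | triangle : ZXpi 1 1 !![1, 1; 0, 1]
  | wire : ZXpi 1 1 (1 : Matrix (Fin (2 ^ 1)) (Fin (2 ^ 1)) ℂ)
  | swap : ZXpi 2 2 !![1, 0, 0, 0; 0, 0, 1, 0; 0, 1, 0, 0; 0, 0, 0, 1]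
  | cup : ZXpi 2 0 !![1, 0, 0, 1]
  | cap : ZXpi 0 2 !![1; 0; 0; 1]
  | empty : ZXpi 0 0 (1 : Matrix (Fin (2 ^ 0)) (Fin (2 ^ 0)) ℂ)
  | kron {n₁ m₁ n₂ m₂ : ℕ} {A : Matrix (Fin (2 ^ m₁)) (Fin (2 ^ n₁)) ℂ}
      {B : Matrix (Fin (2 ^ m₂)) (Fin (2 ^ n₂)) ℂ} :
      ZXpi n₁ m₁ A → ZXpi n₂ m₂ B → ZXpi (n₁ + n₂) (m₁ + m₂) (kron2 A B)
  | comp {a b c : ℕ} {A : Matrix (Fin (2 ^ c)) (Fin (2 ^ b)) ℂ}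
      {B : Matrix (Fin (2 ^ b)) (Fin (2 ^ a)) ℂ} :
      ZXpi b c A → ZXpi a b B → ZXpi a c (A * B)

/-- `M` is an integer matrix up to a power of `1/√2`. -/
def IsDyadic {p q : ℕ} (M : Matrix (Fin p) (Fin q) ℂ) : Prop :=
  ∃ (k : ℕ) (A : Matrix (Fin p) (Fin q) ℤ),
    M = (((Real.sqrt 2 : ℝ) : ℂ)⁻¹ ^ k) • A.map (fun z => (z : ℂ))

lemma isDyadic_of_int {p q : ℕ} {M : Matrix (Fin p) (Fin q) ℂ}
    (h : ∀ i j, ∃ z : ℤ, M i j = (z : ℂ)) : IsDyadic M := by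
  choose f hf using h
  refine ⟨0, Matrix.of f, ?_⟩
  ext i j
  simp [hf]

lemma IsDyadic.mul {p q r : ℕ} {M : Matrix (Fin p) (Fin q) ℂ} {N : Matrix (Fin q) (Fin r) ℂ}
    (hM : IsDyadic M) (hN : IsDyadic N) : IsDyadic (M * N) := by
  obtain ⟨k, A, rfl⟩ := hM
  obtain ⟨l, B, rfl⟩ := hN
  refine ⟨k + l, A * B, ?_⟩
  ext i j
  simp only [Matrix.mul_apply, Matrix.smul_apply, Matrix.map_apply, smul_eq_mul, Int.cast_sum,
    Int.cast_mul, Finset.mul_sum, pow_add]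
  refine Finset.sum_congr rfl fun x _ => ?_
  ring

lemma IsDyadic.kron2 {a b c d : ℕ} {M : Matrix (Fin (2 ^ a)) (Fin (2 ^ b)) ℂ}
    {N : Matrix (Fin (2 ^ c)) (Fin (2 ^ d)) ℂ}
    (hM : IsDyadic M) (hN : IsDyadic N) : IsDyadic (kron2 M N) := by
  obtain ⟨k, A, rfl⟩ := hM
  obtain ⟨l, B, rfl⟩ := hN
  refine ⟨k + l, Matrix.reindex (finProdFinEquiv.trans (finCongr (pow_add 2 a c).symm))
    (finProdFinEquiv.trans (finCongr (pow_add 2 b d).symm)) (A ⊗ₖ B), ?_⟩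
  ext i j
  simp only [_root_.kron2, Matrix.reindex_apply, Matrix.submatrix_apply, Matrix.kroneckerMap_apply,
    Matrix.smul_apply, Matrix.map_apply, smul_eq_mul, Int.cast_mul, pow_add]
  ring

lemma isDyadic_one {p : ℕ} : IsDyadic (1 : Matrix (Fin p) (Fin p) ℂ) := by
  refine isDyadic_of_int fun i j => ⟨if i = j then 1 else 0, ?_⟩
  simp [Matrix.one_apply]

lemma isDyadic_Hmat : IsDyadic Hmat := by
  refine ⟨1, !![1, 1; 1, -1], ?_⟩
  ext i j
  fin_cases i <;> fin_cases j <;> simp [Hmat]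

lemma isDyadic_Hpow (n : ℕ) : IsDyadic (Hpow n) := by
  induction n with
  | zero => exact isDyadic_one
  | succ n ih => exact IsDyadic.kron2 (c := 1) (d := 1) ih isDyadic_Hmat

lemma isDyadic_Zspider (n m : ℕ) (α : ℝ) (hα : α = 0 ∨ α = Real.pi) :
    IsDyadic (Zspider n m α) := by
  obtain ⟨e, he⟩ : ∃ e : ℤ, Complex.exp ((α : ℂ) * Complex.I) = (e : ℂ) := by
    rcases hα with rfl | rfl
    · exact ⟨1, by simp⟩
    · exact ⟨-1, by simp [Complex.exp_pi_mul_I]⟩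
  refine isDyadic_of_int fun i j => ⟨(if (i : ℕ) = 0 ∧ (j : ℕ) = 0 then 1 else 0) +
    (if (i : ℕ) = 2 ^ m - 1 ∧ (j : ℕ) = 2 ^ n - 1 then e else 0), ?_⟩
  simp only [Zspider, Matrix.of_apply, he]
  push_cast
  rfl

theorem zxpi_subset_dyadic (n m : ℕ) (M : Matrix (Fin (2 ^ m)) (Fin (2 ^ n)) ℂ)
    (hM : ZXpi n m M) :
    ∃ (k : ℕ) (A : Matrix (Fin (2 ^ m)) (Fin (2 ^ n)) ℤ),
      M = (((Real.sqrt 2 : ℝ) : ℂ)⁻¹ ^ k) • A.map (fun z => (z : ℂ)) := by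
  change IsDyadic M
  induction hM with
  | green n m α hα => exact isDyadic_Zspider n m α hα
  | red n m α hα => exact ((isDyadic_Hpow m).mul (isDyadic_Zspider n m α hα)).mul (isDyadic_Hpow n)
  | had => exact isDyadic_Hmat
  | triangle =>
    refine ⟨0, (!![1, 1; 0, 1] : Matrix (Fin 2) (Fin 2) ℤ), ?_⟩
    ext i j
    change Fin 2 at i j
    fin_cases i <;> fin_cases j <;> simp
  | wire => exact isDyadic_one
  | swap =>
    refine ⟨0, (!![1, 0, 0, 0; 0, 0, 1, 0; 0, 1, 0, 0; 0, 0, 0, 1] :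
      Matrix (Fin 4) (Fin 4) ℤ), ?_⟩
    ext i j
    change Fin 4 at i j
    fin_cases i <;> fin_cases j <;> simp
  | cup =>
    refine ⟨0, (!![1, 0, 0, 1] : Matrix (Fin 1) (Fin 4) ℤ), ?_⟩
    ext i j
    change Fin 1 at i
    change Fin 4 at j
    fin_cases i <;> fin_cases j <;> simp
  | cap =>
    refine ⟨0, (!![1; 0; 0; 1] : Matrix (Fin 4) (Fin 1) ℤ), ?_⟩
    ext i j
    change Fin 4 at i
    change Fin 1 at j
    fin_cases i <;> fin_cases j <;> simp
  | empty => exact isDyadic_one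
  | kron _ _ hA hB => exact hA.kron2 hB
  | comp _ _ hA hB => exact hA.mul hB
end

section
/- For all n, m ∈ ℕ, every matrix M ∈ ⋃_{k∈ℕ} (1/√2)^k · M_{2^m × 2^n}(ℤ) — that is, every integer 2^m × 2^n matrix multiplied by a nonnegative integer power of 1/√2 — can be obtained from the generator matrices of the π-fragment of the ΔZX-calculus by finitely many Kronecker products and matrix compositions. Hence the matrices representable in this fragment are exactly ⋃_{k∈ℕ} (1/√2)^k · M_{2^m × 2^n}(ℤ). -/
open Complex Matrix Kronecker

namespace ZXaux

/-- Index equivalence for concatenating bit strings. -/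
def pe (a c : ℕ) : Fin (2 ^ a) × Fin (2 ^ c) ≃ Fin (2 ^ (a + c)) :=
  finProdFinEquiv.trans (finCongr (pow_add 2 a c).symm)

theorem pe_val {a c : ℕ} (i : Fin (2 ^ a)) (k : Fin (2 ^ c)) :
    (pe a c (i, k)).val = k.val + 2 ^ c * i.val := by
  simp [pe]

theorem kron2_pe {a b c d : ℕ} (A : Matrix (Fin (2 ^ a)) (Fin (2 ^ b)) ℂ)
    (B : Matrix (Fin (2 ^ c)) (Fin (2 ^ d)) ℂ) (i j k l) :
    kron2 A B (pe a c (i, k)) (pe b d (j, l)) = A i j * B k l := by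
  have h1 : (finProdFinEquiv.trans (finCongr (pow_add 2 a c).symm)).symm (pe a c (i, k)) = (i, k) :=
    (pe a c).symm_apply_apply _
  have h2 : (finProdFinEquiv.trans (finCongr (pow_add 2 b d).symm)).symm (pe b d (j, l)) = (j, l) :=
    (pe b d).symm_apply_apply _
  simp only [kron2, Matrix.reindex_apply, Matrix.submatrix_apply, h1, h2]
  rfl

theorem pe_forall {a c : ℕ} {p : Fin (2 ^ (a + c)) → Prop} (h : ∀ i k, p (pe a c (i, k))) :
    ∀ x, p x := by
  intro x
  obtain ⟨⟨i, k⟩, rfl⟩ := (pe a c).surjective x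
  exact h i k

theorem pe_sum {a c : ℕ} (f : Fin (2 ^ (a + c)) → ℂ) :
    ∑ x, f x = ∑ i, ∑ k, f (pe a c (i, k)) := by
  rw [← (pe a c).sum_comp, Fintype.sum_prod_type]

theorem pe_assoc (m : ℕ) (i : Fin (2 ^ m)) (c d : Fin (2 ^ 1)) :
    (pe m (1 + 1) (i, pe 1 1 (c, d)) : Fin (2 ^ (m + 1 + 1))) =
      pe (m + 1) 1 (pe m 1 (i, c), d) := by
  apply Fin.ext
  have h1 := pe_val i (pe 1 1 (c, d))
  have h2 := pe_val (pe m 1 (i, c)) d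
  have h3 := pe_val i c
  have h4 := pe_val c d
  refine h1.trans (Eq.trans ?_ h2.symm)
  rw [h3, h4]
  ring

theorem pe_assoc' (m n : ℕ) (i : Fin (2 ^ m)) (c : Fin (2 ^ n)) (d : Fin (2 ^ 1)) :
    (pe m (n + 1) (i, pe n 1 (c, d)) : Fin (2 ^ (m + n + 1))) =
      pe (m + n) 1 (pe m n (i, c), d) := by
  apply Fin.ext
  have h1 := pe_val i (pe n 1 (c, d))
  have h2 := pe_val (pe m n (i, c)) d
  have h3 := pe_val i c
  have h4 := pe_val c d
  refine h1.trans (Eq.trans ?_ h2.symm)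
  rw [h3, h4]
  ring

theorem pe_zero (m : ℕ) (i : Fin (2 ^ m)) (c : Fin (2 ^ 0)) :
    (pe m 0 (i, c) : Fin (2 ^ m)) = i := by
  apply Fin.ext
  have h1 := pe_val i c
  refine h1.trans ?_
  have : c.val = 0 := by have := c.isLt; simp at this; omega
  simp

/-- the scalar 1/√2 -/
noncomputable def s : ℂ := ((Real.sqrt 2 : ℝ) : ℂ)⁻¹

theorem s_def : s = ((Real.sqrt 2 : ℝ) : ℂ)⁻¹ := rfl

theorem s_sq : s * s = 1 / 2 := by
  unfold s
  rw [← mul_inv, ← Complex.ofReal_mul, Real.mul_self_sqrt (by norm_num)]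
  norm_num

theorem bit_cases (c : Fin (2 ^ 1)) : c = 0 ∨ c = 1 := by
  revert c; decide

theorem all_eq : ∀ i j : Fin (2 ^ 0), i = j := by decide

theorem sum_bit (f : Fin (2 ^ 1) → ℂ) : ∑ c, f c = f 0 + f 1 := Fin.sum_univ_two f

theorem ZX_cast {a b c d : ℕ} (h : a = b) (h' : c = d) {A : Matrix (Fin (2 ^ c)) (Fin (2 ^ a)) ℂ}
    (hA : ZXpi a c A) :
    ZXpi b d (Matrix.of fun i j => A (Fin.cast (by rw [h']) i) (Fin.cast (by rw [h]) j)) := by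
  subst h h'
  exact hA

/-! ### Soundness -/

def Dy {a b : ℕ} (M : Matrix (Fin a) (Fin b) ℂ) : Prop :=
  ∃ k : ℕ, ∀ i j, ∃ z : ℤ, M i j = s ^ k * z

theorem Dy.kron {a b c d : ℕ} {A : Matrix (Fin (2 ^ a)) (Fin (2 ^ b)) ℂ}
    {B : Matrix (Fin (2 ^ c)) (Fin (2 ^ d)) ℂ} (hA : Dy A) (hB : Dy B) : Dy (kron2 A B) := by
  obtain ⟨k, hk⟩ := hA
  obtain ⟨l, hl⟩ := hB
  refine ⟨k + l, pe_forall fun i i' => pe_forall fun j j' => ?_⟩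
  obtain ⟨z, hz⟩ := hk i j
  obtain ⟨w, hw⟩ := hl i' j'
  refine ⟨z * w, ?_⟩
  rw [kron2_pe, hz, hw]
  push_cast
  ring

theorem Dy.mul {a b c : ℕ} {A : Matrix (Fin a) (Fin b) ℂ}
    {B : Matrix (Fin b) (Fin c) ℂ} (hA : Dy A) (hB : Dy B) : Dy (A * B) := by
  obtain ⟨k, hk⟩ := hA
  obtain ⟨l, hl⟩ := hB
  choose f hf using hk
  choose g hg using hl
  refine ⟨k + l, fun i j => ⟨∑ x, f i x * g x j, ?_⟩⟩
  rw [Matrix.mul_apply]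
  push_cast
  rw [Finset.mul_sum]
  refine Finset.sum_congr rfl fun x _ => ?_
  rw [hf, hg]
  ring

theorem Dy.one {a : ℕ} : Dy (1 : Matrix (Fin a) (Fin a) ℂ) := by
  refine ⟨0, fun i j => ⟨if i = j then 1 else 0, ?_⟩⟩
  rw [Matrix.one_apply]
  split_ifs <;> simp

theorem Dy.had : Dy Hmat := by
  refine ⟨1, fun i j => ⟨(!![1, 1; 1, -1] : Matrix (Fin 2) (Fin 2) ℤ) i j, ?_⟩⟩
  fin_cases i <;> fin_cases j <;> simp [Hmat, s]

theorem Dy.hpow (n : ℕ) : Dy (Hpow n) := by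
  induction n with
  | zero => exact Dy.one
  | succ n ih => exact ih.kron (c := 1) (d := 1) Dy.had

theorem Dy.green (n m : ℕ) (α : ℝ) (hα : α = 0 ∨ α = Real.pi) : Dy (Zspider n m α) := by
  obtain ⟨w, hw⟩ : ∃ w : ℤ, Complex.exp ((α : ℂ) * Complex.I) = w := by
    rcases hα with rfl | rfl
    · exact ⟨1, by simp⟩
    · exact ⟨-1, by simp⟩
  refine ⟨0, fun i j => ⟨(if (i : ℕ) = 0 ∧ (j : ℕ) = 0 then 1 else 0) +
    (if (i : ℕ) = 2 ^ m - 1 ∧ (j : ℕ) = 2 ^ n - 1 then w else 0), ?_⟩⟩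
  simp only [Zspider, Matrix.of_apply, hw]
  push_cast
  simp

theorem ZX_sound {n m : ℕ} {M : Matrix (Fin (2 ^ m)) (Fin (2 ^ n)) ℂ} (h : ZXpi n m M) : Dy M := by
  induction h with
  | green n m α hα => exact Dy.green n m α hα
  | red n m α hα => exact ((Dy.hpow m).mul (Dy.green n m α hα)).mul (Dy.hpow n)
  | had => exact Dy.had
  | triangle =>
    refine ⟨0, fun i j => ⟨(!![1, 1; 0, 1] : Matrix (Fin 2) (Fin 2) ℤ) i j, ?_⟩⟩
    rcases bit_cases i with rfl | rfl <;> rcases bit_cases j with rfl | rfl <;> simp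
  | wire => exact Dy.one
  | swap =>
    refine ⟨0, fun i j => ⟨(!![1, 0, 0, 0; 0, 0, 1, 0; 0, 1, 0, 0; 0, 0, 0, 1] :
      Matrix (Fin 4) (Fin 4) ℤ) i j, ?_⟩⟩
    change Fin 4 at i j
    fin_cases i <;> fin_cases j <;> simp
  | cup =>
    refine ⟨0, fun i j => ⟨(!![1, 0, 0, 1] : Matrix (Fin 1) (Fin 4) ℤ) i j, ?_⟩⟩
    change Fin 1 at i
    change Fin 4 at j
    fin_cases i <;> fin_cases j <;> simp
  | cap =>
    refine ⟨0, fun i j => ⟨(!![1; 0; 0; 1] : Matrix (Fin 4) (Fin 1) ℤ) i j, ?_⟩⟩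
    change Fin 1 at j
    change Fin 4 at i
    fin_cases i <;> fin_cases j <;> simp
  | empty => exact Dy.one
  | kron _ _ h1 h2 => exact h1.kron h2
  | comp _ _ h1 h2 => exact h1.mul h2

/-! ### Completeness: small gadgets -/

theorem ZX_congr {n m : ℕ} {A B : Matrix (Fin (2 ^ m)) (Fin (2 ^ n)) ℂ} (hA : ZXpi n m A)
    (h : ∀ i j, B i j = A i j) : ZXpi n m B := by
  have : B = A := by ext i j; exact h i j
  rwa [this]

theorem ZX_id (n : ℕ) : ZXpi n n 1 := by
  induction n with
  | zero => exact ZXpi.empty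
  | succ n ih =>
    have h := ZXpi.kron ih ZXpi.wire
    convert h using 1
    ext i j
    revert i j
    refine pe_forall fun i c => pe_forall fun j d => ?_
    rw [kron2_pe]
    simp only [Matrix.one_apply, (pe n 1).injective.eq_iff, Prod.mk.injEq]
    by_cases h1 : i = j <;> by_cases h2 : c = d <;> simp [h1, h2]

theorem ZX_smul {n m : ℕ} {z : ℂ} (hz : ZXpi 0 0 (Matrix.of fun _ _ => z))
    {A : Matrix (Fin (2 ^ m)) (Fin (2 ^ n)) ℂ} (hA : ZXpi n m A) : ZXpi n m (z • A) := by
  refine ZX_congr (ZXpi.kron hA hz) fun i j => ?_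
  have h := kron2_pe A (Matrix.of fun _ _ => z : Matrix (Fin (2 ^ 0)) (Fin (2 ^ 0)) ℂ) i j 0 0
  rw [pe_zero, pe_zero] at h
  rw [Matrix.smul_apply, smul_eq_mul, mul_comm]
  exact h.symm

theorem ZX_zdiag : ZXpi 1 1 !![1, 0; 0, -1] := by
  refine ZX_congr (ZXpi.green 1 1 Real.pi (Or.inr rfl)) fun i j => ?_
  rcases bit_cases i with rfl | rfl <;> rcases bit_cases j with rfl | rfl <;> simp [Zspider]

theorem ZX_not : ZXpi 1 1 !![0, 1; 1, 0] := by
  refine ZX_congr (ZXpi.comp (ZXpi.comp ZXpi.had ZX_zdiag) ZXpi.had) fun i j => ?_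
  have h := s_sq
  rcases bit_cases i with rfl | rfl <;> rcases bit_cases j with rfl | rfl <;>
    simp [Matrix.mul_apply, sum_bit, Hmat] <;> (try simp only [← s_def]) <;> linear_combination (-2) * h

theorem ZX_triT : ZXpi 1 1 !![1, 0; 1, 1] := by
  refine ZX_congr (ZXpi.comp (ZXpi.comp ZX_not ZXpi.triangle) ZX_not) fun i j => ?_
  rcases bit_cases i with rfl | rfl <;> rcases bit_cases j with rfl | rfl <;>
    simp [Matrix.mul_apply]

/-- the weight of a control bit -/
def wt (d : Fin (2 ^ 1)) (z : ℂ) : ℂ := if d = 0 then 1 else z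

theorem wt_zero (z : ℂ) : wt 0 z = 1 := rfl
theorem wt_one (z : ℂ) : wt 1 z = z := rfl

theorem copy_pe (a b c : Fin (2 ^ 1)) :
    Zspider 1 (1 + 1) 0 (pe 1 1 (a, b)) c = if a = c ∧ b = c then 1 else 0 := by
  rcases bit_cases a with rfl | rfl <;> rcases bit_cases b with rfl | rfl <;>
    rcases bit_cases c with rfl | rfl <;> simp [Zspider] <;> decide

theorem merge_pe (a b c : Fin (2 ^ 1)) :
    Zspider (1 + 1) 1 0 c (pe 1 1 (a, b)) = if a = c ∧ b = c then 1 else 0 := by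
  rcases bit_cases a with rfl | rfl <;> rcases bit_cases b with rfl | rfl <;>
    rcases bit_cases c with rfl | rfl <;> simp [Zspider] <;> decide

theorem had_apply (i j : Fin (2 ^ 1)) : Hmat i j = s * (if i = 1 ∧ j = 1 then -1 else 1) := by
  rcases bit_cases i with rfl | rfl <;> rcases bit_cases j with rfl | rfl <;> simp [Hmat, s]

theorem tri_apply (i j : Fin (2 ^ 1)) : (!![1, 1; 0, 1] : Matrix (Fin 2) (Fin 2) ℂ) i j =
    (if i = 1 ∧ j = 0 then 0 else 1) := by
  rcases bit_cases i with rfl | rfl <;> rcases bit_cases j with rfl | rfl <;> simp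

theorem kron2_assoc_row {m b d : ℕ} (A : Matrix (Fin (2 ^ m)) (Fin (2 ^ b)) ℂ)
    (B : Matrix (Fin (2 ^ (1 + 1))) (Fin (2 ^ d)) ℂ) (i j k k' l) :
    kron2 A B (pe (m + 1) 1 (pe m 1 (i, k), k')) (pe b d (j, l)) = A i j * B (pe 1 1 (k, k')) l := by
  rw [← pe_assoc]
  exact kron2_pe A B _ _ _ _

theorem kron2_assoc_col {m b d : ℕ} (A : Matrix (Fin (2 ^ b)) (Fin (2 ^ m)) ℂ)
    (B : Matrix (Fin (2 ^ d)) (Fin (2 ^ (1 + 1))) ℂ) (i j k k' l) :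
    kron2 A B (pe b d (j, l)) (pe (m + 1) 1 (pe m 1 (i, k), k')) = A j i * B l (pe 1 1 (k, k')) := by
  rw [← pe_assoc]
  exact kron2_pe A B _ _ _ _

theorem kron2_assoc_both {m b : ℕ} (A : Matrix (Fin (2 ^ b)) (Fin (2 ^ m)) ℂ)
    (B : Matrix (Fin (2 ^ (1 + 1))) (Fin (2 ^ (1 + 1))) ℂ) (i j k k' l l') :
    kron2 A B (pe (b + 1) 1 (pe b 1 (j, l), l')) (pe (m + 1) 1 (pe m 1 (i, k), k')) =
      A j i * B (pe 1 1 (l, l')) (pe 1 1 (k, k')) := by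
  rw [← pe_assoc, ← pe_assoc]
  exact kron2_pe A B _ _ _ _

/-- The exclusive-or tensor. -/
theorem ZX_xor : ∃ V : Matrix (Fin (2 ^ (1 + 1))) (Fin (2 ^ 1)) ℂ, ZXpi 1 (1 + 1) V ∧
    ∀ a b c, V (pe 1 1 (a, b)) c = if (a = b ↔ c = 0) then s else 0 := by
  refine ⟨_, ZXpi.comp (ZXpi.comp (ZXpi.kron ZXpi.had ZXpi.had) (ZXpi.green 1 (1 + 1) 0 (Or.inl rfl)))
    ZXpi.had, fun a b c => ?_⟩
  have h := s_sq
  simp only [Matrix.mul_apply, pe_sum, sum_bit]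
  simp only [kron2_pe, copy_pe, had_apply]
  rcases bit_cases a with rfl | rfl <;> rcases bit_cases b with rfl | rfl <;>
    rcases bit_cases c with rfl | rfl <;> simp <;>
    first | linear_combination 2 * s * h | ring

theorem ZX_e0row : ZXpi 1 0 (Matrix.of fun _ c => if c = 0 then 1 else 0) := by
  refine ZX_congr (ZXpi.comp (ZXpi.green 1 0 Real.pi (Or.inr rfl)) ZXpi.triangle) fun i c => ?_
  simp only [Matrix.mul_apply, sum_bit]
  rcases bit_cases c with rfl | rfl <;> simp [Zspider]

theorem ZX_e1 : ZXpi 0 1 (Matrix.of fun c _ => if c = 1 then 1 else 0) := by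
  refine ZX_congr (ZXpi.comp ZX_zdiag
    (ZXpi.comp ZXpi.triangle (ZXpi.green 0 1 Real.pi (Or.inr rfl)))) fun c i => ?_
  simp only [Matrix.mul_apply, sum_bit]
  rcases bit_cases c with rfl | rfl <;> simp [Zspider]

theorem ZX_s : ZXpi 0 0 (Matrix.of fun _ _ => s) := by
  refine ZX_congr (ZXpi.comp ZX_e0row (ZXpi.comp ZXpi.had ZX_e1)) fun i j => ?_
  simp only [Matrix.mul_apply, sum_bit]
  simp only [had_apply]
  simp

theorem ZX_two : ZXpi 0 0 (Matrix.of fun _ _ => 2) := by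
  refine ZX_congr (ZXpi.green 0 0 0 (Or.inl rfl)) fun i j => ?_
  simp [Zspider]
  norm_num

/-- The W tensor. -/
theorem ZX_W : ∃ W : Matrix (Fin (2 ^ (1 + 1))) (Fin (2 ^ 1)) ℂ, ZXpi 1 (1 + 1) W ∧
    ∀ a b c, W (pe 1 1 (a, b)) c =
      if c = 0 then (if a = 0 ∧ b = 0 then 1 else 0) else if a = b then 0 else 1 := by
  obtain ⟨V, hV, hV'⟩ := ZX_xor
  have h1 : ZXpi (1 + 1 + 1) (1 + 1) _ :=
    ZXpi.kron (ZXpi.green (1 + 1) 1 0 (Or.inl rfl)) ZXpi.wire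
  have h2 : ZXpi (1 + 1) (1 + 1 + 1) _ := ZXpi.kron (n₂ := 1) (m₂ := 1 + 1) ZXpi.triangle hV
  have h3 := ZXpi.comp h1 (ZXpi.comp h2 (ZXpi.green 1 (1 + 1) 0 (Or.inl rfl)))
  refine ⟨_, ZX_smul ZX_two (ZX_smul ZX_s h3), fun a b c => ?_⟩
  have h := s_sq
  simp only [Matrix.smul_apply, Matrix.mul_apply, pe_sum, sum_bit]
  simp only [kron2_pe, kron2_assoc_row, copy_pe, merge_pe, hV', tri_apply]
  rcases bit_cases a with rfl | rfl <;> rcases bit_cases b with rfl | rfl <;>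
    rcases bit_cases c with rfl | rfl <;> simp <;>
    first | linear_combination 2 * h | ring

/-! ### Controlled diagonals -/

/-- `[i]|k⟩|d⟩ ↦ v_k^d |k⟩` -/
noncomputable def D {m : ℕ} (v : Fin (2 ^ m) → ℂ) : Matrix (Fin (2 ^ m)) (Fin (2 ^ (m + 1))) ℂ :=
  Matrix.of fun i x => if i = ((pe m 1).symm x).1 then wt ((pe m 1).symm x).2 (v i) else 0

theorem D_pe {m : ℕ} (v : Fin (2 ^ m) → ℂ) (i k d) :
    D v i (pe m 1 (k, d)) = if i = k then wt d (v i) else 0 := by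
  simp [D]

def P {m : ℕ} (v : Fin (2 ^ m) → ℂ) : Prop := ZXpi (m + 1) m (D v)

theorem P_gadget {m : ℕ} {v w u : Fin (2 ^ m) → ℂ} (hv : P v) (hw : P w)
    {G : Matrix (Fin (2 ^ (1 + 1))) (Fin (2 ^ 1)) ℂ} (hG : ZXpi 1 (1 + 1) G)
    (h : ∀ j c, ∑ a, ∑ b, wt a (v j) * wt b (w j) * G (pe 1 1 (a, b)) c = wt c (u j)) : P u := by
  have h1 : ZXpi (m + 1 + 1) (m + 1) _ := ZXpi.kron hv ZXpi.wire
  have h2 : ZXpi (m + 1) (m + 1 + 1) _ := ZXpi.kron (n₂ := 1) (m₂ := 1 + 1) (ZX_id m) hG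
  refine ZX_congr (ZXpi.comp (ZXpi.comp hw h1) h2) fun i => pe_forall fun j c => ?_
  rw [D_pe, ← h]
  simp only [Matrix.mul_apply, pe_sum]
  simp only [kron2_pe, kron2_assoc_row, D_pe, Matrix.one_apply]
  by_cases hij : i = j
  · subst hij
    simp [ite_mul, mul_ite, Finset.sum_ite_eq, Finset.sum_ite_eq']
    grind
  · simp [hij]

theorem P_add {m : ℕ} {v w : Fin (2 ^ m) → ℂ} (hv : P v) (hw : P w) : P (v + w) := by
  obtain ⟨W, hW, hW'⟩ := ZX_W
  refine P_gadget hv hw hW fun j c => ?_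
  simp only [hW', sum_bit]
  rcases bit_cases c with rfl | rfl <;> simp [wt] <;> ring

theorem P_mul {m : ℕ} {v w : Fin (2 ^ m) → ℂ} (hv : P v) (hw : P w) : P (v * w) := by
  refine P_gadget hv hw (ZXpi.green 1 (1 + 1) 0 (Or.inl rfl)) fun j c => ?_
  simp only [copy_pe, sum_bit]
  rcases bit_cases c with rfl | rfl <;> simp [wt]

theorem P_neg_one (m : ℕ) : P (m := m) (fun _ => -1) := by
  refine ZX_congr (ZXpi.kron (ZX_id m) (ZXpi.green 1 0 Real.pi (Or.inr rfl))) fun i =>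
    pe_forall fun j c => ?_
  have h := kron2_pe (1 : Matrix (Fin (2 ^ m)) (Fin (2 ^ m)) ℂ) (Zspider 1 0 Real.pi) i j 0 c
  rw [pe_zero] at h
  refine Eq.trans ?_ h.symm
  rw [D_pe, Matrix.one_apply]
  rcases bit_cases c with rfl | rfl <;> by_cases hij : i = j <;> simp [wt, Zspider, hij]

theorem P_one (m : ℕ) : P (m := m) (fun _ => 1) := by
  have h := P_mul (P_neg_one m) (P_neg_one m)
  convert h using 1
  funext i
  simp

theorem P_zero (m : ℕ) : P (m := m) (fun _ => 0) := by
  have h := P_add (P_one m) (P_neg_one m)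
  convert h using 1
  funext i
  simp

theorem P_int (m : ℕ) (z : ℤ) : P (m := m) (fun _ => (z : ℂ)) := by
  induction z using Int.induction_on with
  | zero => simpa using P_zero m
  | succ n ih =>
    convert P_add ih (P_one m) using 1
    funext i
    simp
  | pred n ih =>
    convert P_add ih (P_neg_one m) using 1
    funext i
    simp [sub_eq_add_neg]

theorem swap_pe (p q r t : Fin (2 ^ 1)) :
    (!![1, 0, 0, 0; 0, 0, 1, 0; 0, 1, 0, 0; 0, 0, 0, 1] : Matrix (Fin 4) (Fin 4) ℂ)
      (pe 1 1 (p, q)) (pe 1 1 (r, t)) = if p = t ∧ q = r then 1 else 0 := by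
  rcases bit_cases p with rfl | rfl <;> rcases bit_cases q with rfl | rfl <;>
    rcases bit_cases r with rfl | rfl <;> rcases bit_cases t with rfl | rfl <;>
    simp <;> rfl

theorem P_ext {m : ℕ} {v : Fin (2 ^ m) → ℂ} (hv : P v) :
    P (m := m + 1) (fun x => v ((pe m 1).symm x).1) := by
  have h1 : ZXpi (m + 1 + 1) (m + 1) _ := ZXpi.kron hv ZXpi.wire
  have h2 : ZXpi (m + 1 + 1) (m + 1 + 1) _ := ZXpi.kron (n₂ := 1 + 1) (m₂ := 1 + 1) (ZX_id m) ZXpi.swap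
  refine ZX_congr (ZXpi.comp h1 h2) ?_
  refine pe_forall fun i b => pe_forall <| pe_forall fun j b' => fun c => ?_
  rw [D_pe]
  simp only [Matrix.mul_apply, pe_sum]
  simp only [kron2_pe, kron2_assoc_both, swap_pe, D_pe, Matrix.one_apply,
    (pe m 1).injective.eq_iff, Prod.mk.injEq, Equiv.symm_apply_apply]
  by_cases hij : i = j
  · subst hij
    simp only [sum_bit]
    rcases bit_cases b with rfl | rfl <;> rcases bit_cases b' with rfl | rfl <;>
      rcases bit_cases c with rfl | rfl <;> simp [wt]
  · simp [hij]
    refine (Finset.sum_eq_zero fun x _ => ?_).symm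
    by_cases hx : x = j
    · subst hx
      simp [hij]
    · simp [hx]

theorem P_x : P (m := 1) (fun b => if b = 0 then 0 else 1) := by
  refine ZX_congr (ZXpi.comp (ZXpi.green (1 + 1) 1 0 (Or.inl rfl)) (ZXpi.kron ZXpi.wire ZX_triT))
    fun i => pe_forall fun j c => ?_
  rw [D_pe]
  simp only [Matrix.mul_apply, pe_sum, sum_bit]
  simp only [kron2_pe, merge_pe]
  rcases bit_cases i with rfl | rfl <;> rcases bit_cases j with rfl | rfl <;>
    rcases bit_cases c with rfl | rfl <;> simp [wt]

theorem P_last (m : ℕ) : P (m := m + 1) (fun x => if ((pe m 1).symm x).2 = 0 then 0 else 1) := by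
  refine ZX_congr (ZXpi.kron (n₂ := 1 + 1) (m₂ := 1) (ZX_id m) P_x) ?_
  refine pe_forall fun i b => pe_forall <| pe_forall fun j b' => fun c => ?_
  rw [D_pe]
  refine Eq.trans ?_ (kron2_assoc_col _ _ _ _ _ _ _).symm
  simp only [D_pe, Matrix.one_apply,
    (pe m 1).injective.eq_iff, Prod.mk.injEq, Equiv.symm_apply_apply]
  by_cases hij : i = j <;> simp [hij]

theorem P_all (m : ℕ) (v : Fin (2 ^ m) → ℤ) : P (fun i => (v i : ℂ)) := by
  induction m with
  | zero =>
    convert P_int 0 (v 0) using 1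
    funext i
    rw [all_eq i 0]
  | succ m ih =>
    have h0 := P_ext (ih fun i => v (pe m 1 (i, 0)))
    have h1 := P_ext (ih fun i => v (pe m 1 (i, 1)))
    have hx := P_last m
    have hn := P_neg_one (m + 1)
    convert P_add h0 (P_mul hx (P_add h1 (P_mul hn h0))) using 1
    funext i
    revert i
    refine pe_forall fun i c => ?_
    rcases bit_cases c with rfl | rfl <;> simp

/-! ### Assembly -/

theorem ZX_ones (m : ℕ) : ZXpi 0 m (Matrix.of fun _ _ => 1) := by
  induction m with
  | zero => exact ZX_congr ZXpi.empty fun i j => by rw [all_eq i j]; simp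
  | succ m ih =>
    have h : ZXpi 0 1 (Matrix.of fun _ _ => 1) :=
      ZX_congr (ZXpi.green 0 1 0 (Or.inl rfl)) fun i j => by
        rcases bit_cases i with rfl | rfl <;> simp [Zspider]
    refine ZX_congr (ZXpi.kron ih h) (pe_forall fun i c => ?_)
    intro j
    have h := kron2_pe (Matrix.of fun _ _ => 1 : Matrix (Fin (2 ^ m)) (Fin (2 ^ 0)) ℂ)
      (Matrix.of fun _ _ => 1 : Matrix (Fin (2 ^ 1)) (Fin (2 ^ 0)) ℂ) i j c 0
    rw [pe_zero] at h
    refine Eq.trans ?_ h.symm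
    simp

theorem ZX_onesrow (m : ℕ) : ZXpi m 0 (Matrix.of fun _ _ => 1) := by
  induction m with
  | zero => exact ZX_congr ZXpi.empty fun i j => by rw [all_eq i j]; simp
  | succ m ih =>
    have h : ZXpi 1 0 (Matrix.of fun _ _ => 1) :=
      ZX_congr (ZXpi.green 1 0 0 (Or.inl rfl)) fun j i => by
        rcases bit_cases i with rfl | rfl <;> simp [Zspider]
    refine ZX_congr (ZXpi.kron ih h) fun j => (pe_forall fun i c => ?_)
    have h := kron2_pe (Matrix.of fun _ _ => 1 : Matrix (Fin (2 ^ 0)) (Fin (2 ^ m)) ℂ)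
      (Matrix.of fun _ _ => 1 : Matrix (Fin (2 ^ 0)) (Fin (2 ^ 1)) ℂ) j i 0 c
    rw [pe_zero] at h
    refine Eq.trans ?_ h.symm
    simp

theorem ZX_ones_e1 (m : ℕ) : ∃ E : Matrix (Fin (2 ^ (m + 1))) (Fin (2 ^ 0)) ℂ, ZXpi 0 (m + 1) E ∧
    ∀ i c j, E (pe m 1 (i, c)) j = if c = 1 then 1 else 0 := by
  refine ⟨_, ZXpi.kron (ZX_ones m) ZX_e1, fun i c j => ?_⟩
  have h := kron2_pe (Matrix.of fun _ _ => 1 : Matrix (Fin (2 ^ m)) (Fin (2 ^ 0)) ℂ)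
      (Matrix.of fun c _ => if c = 1 then 1 else 0 : Matrix (Fin (2 ^ 1)) (Fin (2 ^ 0)) ℂ) i j c 0
  rw [pe_zero] at h
  refine Eq.trans h ?_
  simp

theorem ZX_input (n m : ℕ) : ∃ E : Matrix (Fin (2 ^ (n + m + 1))) (Fin (2 ^ n)) ℂ,
    ZXpi n (n + m + 1) E ∧
    ∀ j i c j', E (pe (n + m) 1 (pe n m (j, i), c)) j' = if j = j' ∧ c = 1 then 1 else 0 := by
  obtain ⟨E, hE, hE'⟩ := ZX_ones_e1 m
  refine ⟨_, ZXpi.kron (ZX_id n) hE, fun j i c j' => ?_⟩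
  rw [← pe_assoc']
  have h := kron2_pe (1 : Matrix (Fin (2 ^ n)) (Fin (2 ^ n)) ℂ) E j j' (pe m 1 (i, c)) 0
  rw [pe_zero] at h
  refine Eq.trans h ?_
  rw [hE', Matrix.one_apply]
  by_cases h1 : j = j' <;> by_cases h2 : c = 1 <;> simp [h1, h2]

theorem pe_zero_left (m : ℕ) (i : Fin (2 ^ m)) (h : 2 ^ m = 2 ^ (0 + m)) :
    Fin.cast h i = pe 0 m (0, i) := by
  apply Fin.ext
  rw [pe_val]
  simp

theorem ZX_output (n m : ℕ) : ∃ E : Matrix (Fin (2 ^ m)) (Fin (2 ^ (n + m))) ℂ,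
    ZXpi (n + m) m E ∧ ∀ j i i', E i' (pe n m (j, i)) = if i' = i then 1 else 0 := by
  refine ⟨_, ZX_cast rfl (Nat.zero_add m) (ZXpi.kron (ZX_onesrow n) (ZX_id m)), fun j i i' => ?_⟩
  simp only [Matrix.of_apply, Fin.cast_eq_self]
  rw [pe_zero_left, kron2_pe, Matrix.one_apply]
  simp

theorem ZX_int (n m : ℕ) (A : Matrix (Fin (2 ^ m)) (Fin (2 ^ n)) ℤ) :
    ZXpi n m (A.map (fun z => (z : ℂ))) := by
  obtain ⟨E, hE, hE'⟩ := ZX_input n m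
  obtain ⟨F, hF, hF'⟩ := ZX_output n m
  have hD := P_all (n + m) (fun x => A ((pe n m).symm x).2 ((pe n m).symm x).1)
  refine ZX_congr (ZXpi.comp hF (ZXpi.comp hD hE)) fun i j => ?_
  simp only [Matrix.mul_apply, pe_sum]
  simp only [hE', hF', D_pe, (pe n m).injective.eq_iff, Prod.mk.injEq, Equiv.symm_apply_apply,
    sum_bit]
  simp [wt]
  simp [ite_and]

theorem ZX_complete (n m k : ℕ) (A : Matrix (Fin (2 ^ m)) (Fin (2 ^ n)) ℤ) :
    ZXpi n m ((s ^ k) • A.map (fun z => (z : ℂ))) := by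
  induction k with
  | zero => simpa using ZX_int n m A
  | succ k ih =>
    rw [pow_succ', mul_smul]
    exact ZX_smul ZX_s ih

end ZXaux

theorem dyadic_subset_zxpi_and_exact (n m : ℕ) :
    (∀ (k : ℕ) (A : Matrix (Fin (2 ^ m)) (Fin (2 ^ n)) ℤ),
      ZXpi n m ((((Real.sqrt 2 : ℝ) : ℂ)⁻¹ ^ k) • A.map (fun z => (z : ℂ)))) ∧
    (∀ M : Matrix (Fin (2 ^ m)) (Fin (2 ^ n)) ℂ,
      ZXpi n m M ↔ ∃ (k : ℕ) (A : Matrix (Fin (2 ^ m)) (Fin (2 ^ n)) ℤ),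
        M = (((Real.sqrt 2 : ℝ) : ℂ)⁻¹ ^ k) • A.map (fun z => (z : ℂ))) := by
  refine ⟨fun k A => ZXaux.ZX_complete n m k A, fun M => ⟨fun h => ?_, ?_⟩⟩
  · obtain ⟨k, hk⟩ := ZXaux.ZX_sound h
    choose f hf using hk
    refine ⟨k, Matrix.of f, ?_⟩
    ext i j
    rw [hf]
    rfl
  · rintro ⟨k, A, rfl⟩
    exact ZXaux.ZX_complete n m k A
end

section
/- For all n, m ∈ ℕ, the set of matrices obtained from the generator matrices of the ZW-calculus together with the 1×1 scalar matrix (1/√2), by finitely many Kronecker products and matrix compositions, is exactly ⋃_{k∈ℕ} (1/√2)^k · M_{2^m × 2^n}(ℤ), the set of integer 2^m × 2^n matrices multiplied by a nonnegative integer power of 1/√2. -/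
open Complex Matrix Kronecker

/-- The family of matrices generated by the generator matrices of the ZW-calculus
together with the `1×1` scalar matrix `(1/√2)`, closed under Kronecker product and
matrix composition. `ZWhalf n m M` means that `M : ℂ^{2^n} → ℂ^{2^m}` is representable. -/
inductive ZWhalf : (n m : ℕ) → Matrix (Fin (2 ^ m)) (Fin (2 ^ n)) ℂ → Prop
  | empty : ZWhalf 0 0 (1 : Matrix (Fin (2 ^ 0)) (Fin (2 ^ 0)) ℂ)
  | wire : ZWhalf 1 1 (1 : Matrix (Fin (2 ^ 1)) (Fin (2 ^ 1)) ℂ)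
  | swap : ZWhalf 2 2 !![1, 0, 0, 0; 0, 0, 1, 0; 0, 1, 0, 0; 0, 0, 0, 1]
  | crossing : ZWhalf 2 2 !![1, 0, 0, 0; 0, 0, 1, 0; 0, 1, 0, 0; 0, 0, 0, -1]
  | cap : ZWhalf 0 2 !![1; 0; 0; 1]
  | cup : ZWhalf 2 0 !![1, 0, 0, 1]
  | black11 : ZWhalf 1 1 !![0, 1; 1, 0]
  | black12 : ZWhalf 1 2 !![0, 1; 1, 0; 1, 0; 0, 0]
  | white11 : ZWhalf 1 1 !![1, 0; 0, -1]
  | white21 : ZWhalf 2 1 !![1, 0, 0, 0; 0, 0, 0, -1]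
  | invSqrtTwo : ZWhalf 0 0 (Matrix.of fun _ _ => ((Real.sqrt 2 : ℝ) : ℂ)⁻¹)
  | kron {n₁ m₁ n₂ m₂ : ℕ} {A : Matrix (Fin (2 ^ m₁)) (Fin (2 ^ n₁)) ℂ}
      {B : Matrix (Fin (2 ^ m₂)) (Fin (2 ^ n₂)) ℂ} :
      ZWhalf n₁ m₁ A → ZWhalf n₂ m₂ B → ZWhalf (n₁ + n₂) (m₁ + m₂) (kron2 A B)
  | comp {a b c : ℕ} {A : Matrix (Fin (2 ^ c)) (Fin (2 ^ b)) ℂ}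
      {B : Matrix (Fin (2 ^ b)) (Fin (2 ^ a)) ℂ} :
      ZWhalf b c A → ZWhalf a b B → ZWhalf a c (A * B)

namespace ZWaux

/-- Splitting the index set. -/
def spl (a c : ℕ) : Fin (2 ^ a) × Fin (2 ^ c) ≃ Fin (2 ^ (a + c)) :=
  finProdFinEquiv.trans (finCongr (pow_add 2 a c).symm)

/-- Integer Kronecker product. -/
def kz {a b c d : ℕ} (A : Matrix (Fin (2 ^ a)) (Fin (2 ^ b)) ℤ)
    (B : Matrix (Fin (2 ^ c)) (Fin (2 ^ d)) ℤ) :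
    Matrix (Fin (2 ^ (a + c))) (Fin (2 ^ (b + d))) ℤ :=
  Matrix.of fun i j => A ((spl a c).symm i).1 ((spl b d).symm j).1 *
    B ((spl a c).symm i).2 ((spl b d).symm j).2

/-- Representable integer matrices. -/
def R (n m : ℕ) (A : Matrix (Fin (2 ^ m)) (Fin (2 ^ n)) ℤ) : Prop :=
  ZWhalf n m (A.map (fun z => (z : ℂ)))

theorem kron2_map {a b c d : ℕ} (A : Matrix (Fin (2 ^ a)) (Fin (2 ^ b)) ℤ)
    (B : Matrix (Fin (2 ^ c)) (Fin (2 ^ d)) ℤ) :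
    kron2 (A.map (fun z => (z : ℂ))) (B.map (fun z => (z : ℂ)))
      = (kz A B).map (fun z => (z : ℂ)) := by
  ext i j
  simp [kron2, kz, spl, Matrix.kroneckerMap_apply]

theorem mul_map {a b c : ℕ} (A : Matrix (Fin (2 ^ c)) (Fin (2 ^ b)) ℤ)
    (B : Matrix (Fin (2 ^ b)) (Fin (2 ^ a)) ℤ) :
    (A.map (fun z => (z : ℂ))) * (B.map (fun z => (z : ℂ)))
      = (A * B).map (fun z => (z : ℂ)) := by
  ext i j
  simp [Matrix.mul_apply]

theorem R.kron {n₁ m₁ n₂ m₂ : ℕ} {A : Matrix (Fin (2 ^ m₁)) (Fin (2 ^ n₁)) ℤ}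
    {B : Matrix (Fin (2 ^ m₂)) (Fin (2 ^ n₂)) ℤ} (hA : R n₁ m₁ A) (hB : R n₂ m₂ B) :
    R (n₁ + n₂) (m₁ + m₂) (kz A B) := by
  unfold R
  rw [← kron2_map]
  exact ZWhalf.kron hA hB

theorem R.comp {a b c : ℕ} {A : Matrix (Fin (2 ^ c)) (Fin (2 ^ b)) ℤ}
    {B : Matrix (Fin (2 ^ b)) (Fin (2 ^ a)) ℤ} (hA : R b c A) (hB : R a b B) :
    R a c (A * B) := by
  unfold R
  rw [← mul_map]
  exact ZWhalf.comp hA hB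

theorem R.of {n m : ℕ} {A B : Matrix (Fin (2 ^ m)) (Fin (2 ^ n)) ℤ} (hA : R n m A)
    (h : A = B) : R n m B := h ▸ hA

theorem kz_mul {a b c a' b' c' : ℕ}
    (A : Matrix (Fin (2 ^ a)) (Fin (2 ^ b)) ℤ) (B : Matrix (Fin (2 ^ a')) (Fin (2 ^ b')) ℤ)
    (C : Matrix (Fin (2 ^ b)) (Fin (2 ^ c)) ℤ) (D : Matrix (Fin (2 ^ b')) (Fin (2 ^ c')) ℤ) :
    kz A B * kz C D = kz (A * C) (B * D) := by
  ext i j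
  simp only [kz, Matrix.mul_apply, Matrix.of_apply]
  rw [← (spl b b').sum_comp, Fintype.sum_prod_type, Finset.sum_mul_sum]
  refine Finset.sum_congr rfl fun x _ => Finset.sum_congr rfl fun y _ => ?_
  simp only [Equiv.symm_apply_apply]
  ring

theorem kz_one (a b : ℕ) : kz (1 : Matrix (Fin (2 ^ a)) (Fin (2 ^ a)) ℤ)
    (1 : Matrix (Fin (2 ^ b)) (Fin (2 ^ b)) ℤ) = 1 := by
  ext i j
  simp only [kz, Matrix.of_apply, Matrix.one_apply]
  have : i = j ↔ ((spl a b).symm i).1 = ((spl a b).symm j).1 ∧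
      ((spl a b).symm i).2 = ((spl a b).symm j).2 := by
    rw [← Prod.ext_iff, (spl a b).symm.injective.eq_iff]
  simp only [this]
  split_ifs <;> simp_all

theorem kz_add_left {a b c d : ℕ} (A A' : Matrix (Fin (2 ^ a)) (Fin (2 ^ b)) ℤ)
    (B : Matrix (Fin (2 ^ c)) (Fin (2 ^ d)) ℤ) : kz (A + A') B = kz A B + kz A' B := by
  ext i j
  simp [kz, add_mul]

theorem kz_zero {a b c d : ℕ} (A : Matrix (Fin (2 ^ a)) (Fin (2 ^ b)) ℤ) :
    kz A (0 : Matrix (Fin (2 ^ c)) (Fin (2 ^ d)) ℤ) = 0 := by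
  ext i j
  simp [kz]

theorem spl_fst (a c : ℕ) (i : Fin (2 ^ (a + c))) :
    (((spl a c).symm i).1 : ℕ) = i / 2 ^ c := by
  simp [spl]

theorem spl_snd (a c : ℕ) (i : Fin (2 ^ (a + c))) :
    (((spl a c).symm i).2 : ℕ) = i % 2 ^ c := by
  simp [spl]

/-- Associativity for `2` trailing wires. -/
theorem kz_assoc2 {a b c d : ℕ} (A : Matrix (Fin (2 ^ a)) (Fin (2 ^ b)) ℤ)
    (B : Matrix (Fin (2 ^ c)) (Fin (2 ^ d)) ℤ) {e f : ℕ}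
    (C : Matrix (Fin (2 ^ e)) (Fin (2 ^ f)) ℤ)
    (i : Fin (2 ^ (a + c + e))) (j : Fin (2 ^ (b + d + f))) :
    kz (kz A B) C i j = kz A (kz B C) ⟨i, by rw [← add_assoc]; exact i.2⟩
      ⟨j, by rw [← add_assoc]; exact j.2⟩ := by
  simp only [kz, Matrix.of_apply]
  rw [mul_assoc]
  congr 1
  · congr 1 <;> ext <;> simp only [spl_fst, pow_add, Nat.div_div_eq_div_mul] <;> rw [mul_comm]
  · congr 1 <;> congr 1 <;> ext <;>
      simp only [spl_fst, spl_snd, pow_add, Nat.mod_mul_left_mod, Nat.mod_mul_left_div_self]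

theorem one (n : ℕ) : R n n 1 := by
  induction n with
  | zero => simpa [R] using ZWhalf.empty
  | succ n ih =>
    have w : R 1 1 1 := by simpa [R] using ZWhalf.wire
    have := ih.kron w
    rwa [kz_one] at this

theorem swp : R 2 2 !![1, 0, 0, 0; 0, 0, 1, 0; 0, 1, 0, 0; 0, 0, 0, 1] := by
  unfold R
  convert ZWhalf.swap using 1
  ext i j
  fin_cases i <;> fin_cases j <;> simp
theorem cap : R 0 2 !![1; 0; 0; 1] := by
  unfold R
  convert ZWhalf.cap using 1
  ext i j
  fin_cases i <;> fin_cases j <;> simp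
theorem cup : R 2 0 !![1, 0, 0, 1] := by
  unfold R
  convert ZWhalf.cup using 1
  ext i j
  fin_cases i <;> fin_cases j <;> simp
theorem xx : R 1 1 !![0, 1; 1, 0] := by
  unfold R
  convert ZWhalf.black11 using 1
  ext i j
  fin_cases i <;> fin_cases j <;> simp
theorem zz : R 1 1 !![1, 0; 0, -1] := by
  unfold R
  convert ZWhalf.white11 using 1
  ext i j
  fin_cases i <;> fin_cases j <;> simp
theorem b12 : R 1 2 !![0, 1; 1, 0; 1, 0; 0, 0] := by
  unfold R
  convert ZWhalf.black12 using 1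
  ext i j
  fin_cases i <;> fin_cases j <;> simp
theorem w21 : R 2 1 !![1, 0, 0, 0; 0, 0, 0, -1] := by
  unfold R
  convert ZWhalf.white21 using 1
  ext i j
  fin_cases i <;> fin_cases j <;> simp

theorem b21 : R 2 1 !![0, 1, 1, 0; 1, 0, 0, 0] :=
  R.of (R.comp (b := 3) (cup.kron (one 1)) ((one 1).kron b12)) (by decide +kernel)
theorem w12 : R 1 2 !![1, 0; 0, 0; 0, 0; 0, -1] :=
  R.of (R.comp (b := 3) (w21.kron (one 1)) ((one 1).kron cap)) (by decide +kernel)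
theorem copy : R 1 2 !![1, 0; 0, 0; 0, 0; 0, 1] :=
  (w12.comp zz).of (by decide +kernel)
theorem cmp : R 2 1 !![1, 0, 0, 0; 0, 0, 0, 1] :=
  (zz.comp w21).of (by decide +kernel)
theorem disc : R 1 0 !![1, 1] :=
  (cup.comp copy).of (by decide +kernel)
theorem plus : R 0 1 !![1; 1] :=
  (cmp.comp cap).of (by decide +kernel)
theorem eff0 : R 1 0 !![1, 0] :=
  ((cup.comp b12).comp xx).of (by decide +kernel)
theorem ket1 : R 0 1 !![0; 1] :=
  (b21.comp cap).of (by decide +kernel)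
theorem ww : R 1 2 !![1, 0; 0, 1; 0, 1; 0, 0] :=
  (b12.comp xx).of (by decide +kernel)
theorem mg : R 2 1 !![1, 0, 0, 0; 0, 1, 1, 0] :=
  (xx.comp b21).of (by decide +kernel)
theorem uu : R 1 1 !![1, 1; 0, 1] :=
  R.of (R.comp (b := 2) (disc.kron (one 1)) ww) (by decide +kernel)
theorem uinv : R 1 1 !![1, -1; 0, 1] :=
  ((zz.comp uu).comp zz).of (by decide +kernel)
theorem ll : R 2 0 !![1, 1, 0, 1] :=
  R.of (R.comp (b := 3) (cup.kron disc) ((one 1).kron ww)) (by decide +kernel)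
theorem kk : R 2 2 !![1, 0, 0, 0; 0, 1, 0, 0; 0, 0, 0, 0; 0, 0, 0, 1] :=
  R.of (R.comp (b := 4) (((one 1).kron ll).kron (one 1)) (copy.kron copy)) (by decide +kernel)
theorem xr : R 2 2 !![0, 1, 0, 0; 1, 0, 0, 0; 0, 0, 0, 1; 0, 0, 1, 0] :=
  ((one 1).kron xx).of (by decide +kernel)
theorem xl : R 2 2 !![0, 0, 1, 0; 0, 0, 0, 1; 1, 0, 0, 0; 0, 1, 0, 0] :=
  (xx.kron (one 1)).of (by decide +kernel)
theorem kk' : R 2 2 !![1, 0, 0, 0; 0, 1, 0, 0; 0, 0, 1, 0; 0, 0, 0, 0] :=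
  ((xr.comp kk).comp xr).of (by decide +kernel)

/-- The gadget splitting off a flag wire. -/
def P1 : Matrix (Fin (2 ^ 3)) (Fin (2 ^ 2)) ℤ :=
  !![1, 0, 0, 0; 0, 0, 1, 0; 0, 1, 0, 0; 0, 0, 0, 0;
     0, 0, 0, 0; 0, 0, 0, 1; 0, 0, 0, 0; 0, 0, 0, 0]

/-- The gadget merging a flag wire. -/
def Q1 : Matrix (Fin (2 ^ 2)) (Fin (2 ^ 3)) ℤ :=
  !![1, 0, 0, 0, 0, 0, 0, 0;
     0, 0, 1, 0, 1, 0, 0, 0;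
     0, 1, 0, 0, 0, 0, 0, 0;
     0, 0, 0, 1, 0, 1, 0, 0]

theorem rP1 : R 2 3 P1 := by
  have s : R 3 3 _ := (one 1).kron swp
  have k1 : R 3 3 _ := kk.kron (one 1)
  have k2 : R 3 3 _ := (one 1).kron kk'
  have h1 : R 2 3 !![1, 0, 0, 0; 0, 0, 1, 0; 0, 1, 0, 0; 0, 0, 0, 1;
     0, 1, 0, 0; 0, 0, 0, 1; 0, 0, 0, 0; 0, 0, 0, 0] :=
    R.of (R.comp (b := 2) (ww.kron (one 1)) swp) (by decide +kernel)
  have h2 : R 2 3 !![1, 0, 0, 0; 0, 0, 1, 0; 0, 1, 0, 0; 0, 0, 0, 0;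
     0, 1, 0, 0; 0, 0, 0, 1; 0, 0, 0, 0; 0, 0, 0, 0] :=
    (k2.comp h1).of (by decide +kernel)
  exact (s.comp (k1.comp (s.comp h2))).of (by decide +kernel)

theorem rQ1 : R 3 2 Q1 :=
  R.of (R.comp (b := 2) swp (mg.kron (one 1))) (by decide +kernel)

/-- The nilpotent `|0><1|`. -/
def N : Matrix (Fin (2 ^ 1)) (Fin (2 ^ 1)) ℤ := !![0, 1; 0, 0]

/-- The transvection attached to `φ`. -/
def G {n : ℕ} (φ : Fin (2 ^ n) → ℤ) : Matrix (Fin (2 ^ (n + 1))) (Fin (2 ^ (n + 1))) ℤ :=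
  1 + kz (Matrix.diagonal φ) N

theorem G_add {n : ℕ} {φ ψ : Fin (2 ^ n) → ℤ} (h : R (n + 1) (n + 1) (G φ))
    (h' : R (n + 1) (n + 1) (G ψ)) : R (n + 1) (n + 1) (G (φ + ψ)) := by
  refine (h.comp h').of ?_
  have hN : N * N = 0 := by decide +kernel
  have hd : Matrix.diagonal (φ + ψ) = Matrix.diagonal φ + Matrix.diagonal ψ :=
    (Matrix.diagonal_add _ _).symm
  simp only [G, mul_add, add_mul, kz_mul, hN, kz_zero, hd, kz_add_left, one_mul, mul_one]
  abel

theorem G_step {n : ℕ} {φ : Fin (2 ^ n) → ℤ} (h : R (n + 1) (n + 1) (G φ))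
    {P : Matrix (Fin (2 ^ 3)) (Fin (2 ^ 2)) ℤ} {Q : Matrix (Fin (2 ^ 2)) (Fin (2 ^ 3)) ℤ}
    (hP : R 2 3 P) (hQ : R 3 2 Q) (ε : Fin (2 ^ 1) → ℤ) (h1 : Q * P = 1)
    (h2 : Q * (kz N (1 : Matrix (Fin (2 ^ 2)) (Fin (2 ^ 2)) ℤ) * P)
      = kz (Matrix.diagonal ε) N) :
    R (n + 1 + 1) (n + 1 + 1)
      (G (fun i => φ ((spl n 1).symm i).1 * ε ((spl n 1).symm i).2)) := by
  have hp : R (n + 2) (n + 3) _ := (one n).kron hP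
  have hq : R (n + 3) (n + 2) _ := (one n).kron hQ
  have hg : R (n + 3) (n + 3) _ := h.kron (one 2)
  refine (hq.comp (hg.comp hp)).of ?_
  have e1 : (kz (a := n + 1) (b := n + 1) (c := 2) (d := 2) (G φ) 1 :
      Matrix (Fin (2 ^ (n + 3))) (Fin (2 ^ (n + 3))) ℤ) =
      1 + (kz (a := n) (b := n) (c := 3) (d := 3) (Matrix.diagonal φ)
        (kz N (1 : Matrix (Fin (2 ^ 2)) (Fin (2 ^ 2)) ℤ)) :
        Matrix (Fin (2 ^ (n + 3))) (Fin (2 ^ (n + 3))) ℤ) := by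
    unfold G
    rw [kz_add_left, kz_one]
    congr 1
    ext i j
    exact kz_assoc2 (Matrix.diagonal φ) N (1 : Matrix (Fin (2 ^ 2)) (Fin (2 ^ 2)) ℤ) i j
  have e2 : Matrix.diagonal (fun i => φ ((spl n 1).symm i).1 * ε ((spl n 1).symm i).2)
      = kz (Matrix.diagonal φ) (Matrix.diagonal ε) := by
    ext i j
    simp only [kz, Matrix.of_apply, Matrix.diagonal_apply]
    have : i = j ↔ ((spl n 1).symm i).1 = ((spl n 1).symm j).1 ∧
        ((spl n 1).symm i).2 = ((spl n 1).symm j).2 := by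
      rw [← Prod.ext_iff, (spl n 1).symm.injective.eq_iff]
    simp only [this]
    split_ifs <;> simp_all
  have e3 : (kz (a := n + 1) (b := n + 1) (c := 1) (d := 1)
      (kz (Matrix.diagonal φ) (Matrix.diagonal ε)) N :
      Matrix (Fin (2 ^ (n + 2))) (Fin (2 ^ (n + 2))) ℤ) =
      kz (a := n) (b := n) (c := 2) (d := 2) (Matrix.diagonal φ)
        (kz (Matrix.diagonal ε) N) := by
    ext i j
    exact kz_assoc2 (Matrix.diagonal φ) (Matrix.diagonal ε) N i j
  have e4 := kz_mul (c := n) (1 : Matrix (Fin (2 ^ n)) (Fin (2 ^ n)) ℤ) Q 1 P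
  have e5 := kz_mul (c := n) (Matrix.diagonal φ) (kz N (1 : Matrix (Fin (2 ^ 2)) (Fin (2 ^ 2)) ℤ)) 1 P
  have e6 := kz_mul (1 : Matrix (Fin (2 ^ n)) (Fin (2 ^ n)) ℤ) Q (Matrix.diagonal φ)
    (kz N (1 : Matrix (Fin (2 ^ 2)) (Fin (2 ^ 2)) ℤ) * P)
  rw [h1, mul_one, kz_one] at e4
  rw [mul_one] at e5
  rw [one_mul, h2] at e6
  rw [e1, Matrix.add_mul, Matrix.one_mul, Matrix.mul_add, G, e2]
  refine congrArg₂ (· + ·) e4 ?_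
  rw [e3]
  exact (congrArg _ e5).trans e6

theorem G_all (n : ℕ) : ∀ φ : Fin (2 ^ n) → ℤ, R (n + 1) (n + 1) (G φ) := by
  induction n with
  | zero =>
    have key : ∀ z : ℤ, R 1 1 (G (n := 0) (fun _ => z)) := by
      intro z
      induction z using Int.induction_on with
      | zero => exact (one 1).of (by decide +kernel)
      | succ k ih =>
        exact G_add ih (ψ := fun _ => 1) (uu.of (by decide +kernel))
      | pred k ih =>
        exact G_add ih (ψ := fun _ => -1) (uinv.of (by decide +kernel))
    intro φ
    have : φ = fun _ => φ 0 := by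
      funext i
      congr 1
      exact Subsingleton.elim (α := Fin 1) _ _
    rw [this]
    exact key _
  | succ n ih =>
    intro φ
    have a1 := G_step (ih fun i => φ (spl n 1 (i, 1))) rP1 rQ1 ![0, 1]
      (by decide +kernel) (by decide +kernel)
    have a0 := G_step (ih fun i => φ (spl n 1 (i, 0))) (rP1.comp xl) (xl.comp rQ1) ![1, 0]
      (by decide +kernel) (by decide +kernel)
    have := G_add a0 a1
    convert this using 2
    funext i
    obtain ⟨⟨r, b⟩, rfl⟩ := (spl n 1).surjective i
    simp only [Pi.add_apply, Equiv.symm_apply_apply]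
    change Fin 2 at b
    fin_cases b <;> simp

theorem ones (m : ℕ) : R 0 m (Matrix.of fun _ _ => 1) := by
  induction m with
  | zero => exact (one 0).of (by decide +kernel)
  | succ m ih =>
    refine R.of (n := 0) (ih.kron plus) ?_
    have : (!![1; 1] : Matrix (Fin (2 ^ 1)) (Fin (2 ^ 0)) ℤ) = Matrix.of fun _ _ => 1 := by
      decide +kernel
    rw [this]
    ext i j
    simp [kz]

/-- `|1>`. -/
def k1 : Matrix (Fin (2 ^ 1)) (Fin (2 ^ 0)) ℤ := !![0; 1]

/-- `<0|`. -/
def c0 : Matrix (Fin (2 ^ 0)) (Fin (2 ^ 1)) ℤ := !![1, 0]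

/-- The cup. -/
def cupM : Matrix (Fin (2 ^ 0)) (Fin (2 ^ 2)) ℤ := !![1, 0, 0, 1]

theorem rk1 : R 0 1 k1 := ket1
theorem rc0 : R 1 0 c0 := eff0
theorem rcupM : R 2 0 cupM := cup

theorem states (m : ℕ) (A : Matrix (Fin (2 ^ m)) (Fin (2 ^ 0)) ℤ) : R 0 m A := by
  have h1 : R 0 (m + 1) _ := (ones m).kron rk1
  have h2 : R (m + 1) m _ := (one m).kron rc0
  refine (h2.comp ((G_all m fun i => A i 0).comp h1)).of ?_
  have e1 := kz_mul (Matrix.diagonal fun i => A i 0) N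
    (Matrix.of fun (_ : Fin (2 ^ m)) (_ : Fin (2 ^ 0)) => (1 : ℤ))
    k1
  have e2 := kz_mul (1 : Matrix (Fin (2 ^ m)) (Fin (2 ^ m)) ℤ)
    c0
    (Matrix.of fun (_ : Fin (2 ^ m)) (_ : Fin (2 ^ 0)) => (1 : ℤ))
    k1
  have e3 := kz_mul (1 : Matrix (Fin (2 ^ m)) (Fin (2 ^ m)) ℤ)
    c0
    ((Matrix.diagonal fun i => A i 0) *
    (Matrix.of fun (_ : Fin (2 ^ m)) (_ : Fin (2 ^ 0)) => (1 : ℤ)))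
    (N * k1)
  have f1 : c0 *
    k1 = 0 := by decide +kernel
  have f2 : c0 *
    (N * k1) = 1 := by decide +kernel
  rw [f1, kz_zero] at e2
  rw [f2, Matrix.one_mul] at e3
  rw [G, Matrix.add_mul, Matrix.one_mul, Matrix.mul_add]
  refine (congrArg₂ (· + ·) e2 ((congrArg _ e1).trans e3)).trans ?_
  rw [zero_add]
  ext i j
  simp only [kz, Matrix.of_apply, Matrix.diagonal_mul, mul_one]
  have g1 : ((spl m 0).symm i).1 = i := Fin.ext ((spl_fst _ 0 _).trans (by simp))
  have g2 : j = 0 := Subsingleton.elim (α := Fin 1) _ _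
  have g3 : ((spl m 0).symm i).2 = ((spl 0 0).symm j).2 := Subsingleton.elim (α := Fin 1) _ _
  rw [g1, g2]
  rw [g2] at g3
  rw [g3, Matrix.one_apply_eq, mul_one]

/-- Basis kets. -/
def ket (b : Fin 2) : Matrix (Fin (2 ^ 1)) (Fin (2 ^ 0)) ℤ :=
  Matrix.of fun i _ => if i = b then 1 else 0

/-- Basis bras. -/
def bra (b : Fin 2) : Matrix (Fin (2 ^ 0)) (Fin (2 ^ 1)) ℤ :=
  Matrix.of fun _ i => if i = b then 1 else 0

theorem all_int (n : ℕ) : ∀ (m : ℕ) (A : Matrix (Fin (2 ^ m)) (Fin (2 ^ n)) ℤ), R n m A := by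
  induction n with
  | zero => exact states
  | succ n ih =>
    intro m A
    let B : Fin 2 → Matrix (Fin (2 ^ m)) (Fin (2 ^ n)) ℤ :=
      fun b => Matrix.of fun i j => A i (spl n 1 (j, b))
    have h1 : R (n + 1) (m + 2) _ :=
      (ih (m + 1) (kz (B 0) (ket 0) + kz (B 1) (ket 1))).kron (one 1)
    have h2 : R (m + 2) m _ := (one m).kron rcupM
    refine (h2.comp h1).of ?_
    have as : ∀ b, (kz (a := m + 1) (b := n) (c := 1) (d := 1) (kz (B b) (ket b)) (1 : Matrix (Fin (2 ^ 1)) (Fin (2 ^ 1)) ℤ) :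
        Matrix (Fin (2 ^ (m + 2))) (Fin (2 ^ (n + 1))) ℤ) =
        kz (c := 2) (d := 1) (B b) (kz (ket b) (1 : Matrix (Fin (2 ^ 1)) (Fin (2 ^ 1)) ℤ) :
          Matrix (Fin (2 ^ 2)) (Fin (2 ^ 1)) ℤ) := by
      intro b
      ext i j
      exact kz_assoc2 (B b) (ket b) (1 : Matrix (Fin (2 ^ 1)) (Fin (2 ^ 1)) ℤ) i j
    have m0 : ∀ b, cupM * (kz (ket b) (1 : Matrix (Fin (2 ^ 1)) (Fin (2 ^ 1)) ℤ) :
          Matrix (Fin (2 ^ 2)) (Fin (2 ^ 1)) ℤ) = bra b := by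
      decide +kernel
    have ml := fun b => (kz_mul (1 : Matrix (Fin (2 ^ m)) (Fin (2 ^ m)) ℤ) cupM (B b)
        (kz (ket b) (1 : Matrix (Fin (2 ^ 1)) (Fin (2 ^ 1)) ℤ) :
          Matrix (Fin (2 ^ 2)) (Fin (2 ^ 1)) ℤ)).trans
        (congrArg₂ kz (Matrix.one_mul (B b)) (m0 b))
    have sp := kz_add_left (kz (B 0) (ket 0)) (kz (B 1) (ket 1))
      (1 : Matrix (Fin (2 ^ 1)) (Fin (2 ^ 1)) ℤ)
    have s2 := sp.trans (congrArg₂ (· + ·) (as 0) (as 1))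
    refine (congrArg _ s2).trans ?_
    refine (Matrix.mul_add _ _ _).trans ((congrArg₂ (· + ·) (ml 0) (ml 1)).trans ?_)
    ext i j
    obtain ⟨⟨r, b⟩, rfl⟩ := (spl n 1).surjective j
    have g1 : ((spl m 0).symm i).1 = i := Fin.ext ((spl_fst _ 0 _).trans (by simp))
    simp only [kz, Matrix.add_apply, Matrix.of_apply, Equiv.symm_apply_apply, B, bra, g1]
    change Fin 2 at b
    fin_cases b <;> simp

theorem smul_mem {n m : ℕ} {A : Matrix (Fin (2 ^ m)) (Fin (2 ^ n)) ℂ} (h : ZWhalf n m A)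
    (k : ℕ) : ZWhalf n m ((((Real.sqrt 2 : ℝ) : ℂ)⁻¹ ^ k) • A) := by
  induction k with
  | zero => simpa using h
  | succ k ih =>
    have := ih.kron ZWhalf.invSqrtTwo
    have e : kron2 ((((Real.sqrt 2 : ℝ) : ℂ)⁻¹ ^ k) • A)
        (Matrix.of fun (_ : Fin (2 ^ 0)) (_ : Fin (2 ^ 0)) => ((Real.sqrt 2 : ℝ) : ℂ)⁻¹)
        = ((((Real.sqrt 2 : ℝ) : ℂ)⁻¹ ^ (k + 1)) • A) := by
      ext i j
      have g1 : ((spl m 0).symm i).1 = i := Fin.ext ((spl_fst _ 0 _).trans (by simp))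
      have g2 : ((spl n 0).symm j).1 = j := Fin.ext ((spl_fst _ 0 _).trans (by simp))
      have : kron2 ((((Real.sqrt 2 : ℝ) : ℂ)⁻¹ ^ k) • A)
        (Matrix.of fun (_ : Fin (2 ^ 0)) (_ : Fin (2 ^ 0)) => ((Real.sqrt 2 : ℝ) : ℂ)⁻¹) i j
        = (((Real.sqrt 2 : ℝ) : ℂ)⁻¹ ^ k) * A ((spl m 0).symm i).1 ((spl n 0).symm j).1 *
          ((Real.sqrt 2 : ℝ) : ℂ)⁻¹ := rfl
      rw [this, g1, g2, Matrix.smul_apply, smul_eq_mul]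
      ring
    rw [e] at this
    exact this

theorem kron2_smul {a b c d : ℕ} (s t : ℂ) (A : Matrix (Fin (2 ^ a)) (Fin (2 ^ b)) ℂ)
    (B : Matrix (Fin (2 ^ c)) (Fin (2 ^ d)) ℂ) :
    kron2 (s • A) (t • B) = (s * t) • kron2 A B := by
  ext i j
  simp only [kron2, Matrix.reindex_apply, Matrix.submatrix_apply, Matrix.kroneckerMap_apply,
    Matrix.smul_apply, smul_eq_mul]
  ring

theorem forward {n m : ℕ} {M : Matrix (Fin (2 ^ m)) (Fin (2 ^ n)) ℂ} (h : ZWhalf n m M) :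
    ∃ (k : ℕ) (A : Matrix (Fin (2 ^ m)) (Fin (2 ^ n)) ℤ),
      M = (((Real.sqrt 2 : ℝ) : ℂ)⁻¹ ^ k) • A.map (fun z => (z : ℂ)) := by
  induction h with
  | empty => exact ⟨0, 1, by simp⟩
  | wire => exact ⟨0, 1, by simp⟩
  | swap => exact ⟨0, !![1, 0, 0, 0; 0, 0, 1, 0; 0, 1, 0, 0; 0, 0, 0, 1], by
      ext i j
      fin_cases i <;> fin_cases j <;> simp⟩
  | crossing => exact ⟨0, !![1, 0, 0, 0; 0, 0, 1, 0; 0, 1, 0, 0; 0, 0, 0, -1], by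
      ext i j
      fin_cases i <;> fin_cases j <;> simp⟩
  | cap => exact ⟨0, !![1; 0; 0; 1], by
      ext i j
      fin_cases i <;> fin_cases j <;> simp⟩
  | cup => exact ⟨0, !![1, 0, 0, 1], by
      ext i j
      fin_cases i <;> fin_cases j <;> simp⟩
  | black11 => exact ⟨0, !![0, 1; 1, 0], by
      ext i j
      fin_cases i <;> fin_cases j <;> simp⟩
  | black12 => exact ⟨0, !![0, 1; 1, 0; 1, 0; 0, 0], by
      ext i j
      fin_cases i <;> fin_cases j <;> simp⟩
  | white11 => exact ⟨0, !![1, 0; 0, -1], by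
      ext i j
      fin_cases i <;> fin_cases j <;> simp⟩
  | white21 => exact ⟨0, !![1, 0, 0, 0; 0, 0, 0, -1], by
      ext i j
      fin_cases i <;> fin_cases j <;> simp⟩
  | invSqrtTwo => exact ⟨1, Matrix.of fun _ _ => 1, by ext i j; simp⟩
  | kron _ _ h1 h2 =>
    obtain ⟨k, A, rfl⟩ := h1
    obtain ⟨l, B, rfl⟩ := h2
    exact ⟨k + l, kz A B, by
      rw [kron2_smul, kron2_map, ← pow_add (((Real.sqrt 2 : ℝ) : ℂ)⁻¹)]⟩
  | comp _ _ h1 h2 =>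
    obtain ⟨k, A, rfl⟩ := h1
    obtain ⟨l, B, rfl⟩ := h2
    exact ⟨k + l, A * B, by
      rw [Matrix.smul_mul, Matrix.mul_smul, smul_smul, mul_map, pow_add]⟩

end ZWaux

theorem zwhalf_iff_dyadic (n m : ℕ) (M : Matrix (Fin (2 ^ m)) (Fin (2 ^ n)) ℂ) :
    ZWhalf n m M ↔ ∃ (k : ℕ) (A : Matrix (Fin (2 ^ m)) (Fin (2 ^ n)) ℤ),
      M = (((Real.sqrt 2 : ℝ) : ℂ)⁻¹ ^ k) • A.map (fun z => (z : ℂ)) := by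
  constructor
  · exact ZWaux.forward
  · rintro ⟨k, A, rfl⟩
    exact ZWaux.smul_mem (ZWaux.all_int n m A) k
end
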